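/- Let G=(V,E) be an oriented 3-edge-connected cubic graph with a peripheral cycle C with |V(C)| = q. Then for every function f: E → Z/2 × Z/3 there exist at least 2^{2q/3} flows φ: E → Z/2 × Z/3 with φ(e) ≠ f(e) for every e ∈ E. -/

import Mathlib

open scoped Classical

/-- A multigraph with an orientation: each edge `e` has a source `src e` and a target `tgt e`.
Loops and parallel edges are allowed. -/
structure Multigraph (V E : Type) where
  src : E → V
  tgt : E → V

namespace Multigraph

variable {V E : Type}

/-- `u` and `v` are joined by some edge satisfying the predicate `P`. -/
def adjVia (G : Multigraph V E) (P : E → Prop) (u v : V) : Prop :=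
  ∃ e, P e ∧ ((G.src e = u ∧ G.tgt e = v) ∨ (G.src e = v ∧ G.tgt e = u))

/-- `v` is reachable from `u` using only edges satisfying `P`. -/
def Reaches (G : Multigraph V E) (P : E → Prop) : V → V → Prop :=
  Relation.ReflTransGen (G.adjVia P)

/-- The graph is connected when only edges satisfying `P` are kept (all edges deleted
whose predicate fails, all vertices kept). -/
def ConnectedVia (G : Multigraph V E) (P : E → Prop) : Prop :=
  Nonempty V ∧ ∀ u v : V, G.Reaches P u v

def Connected (G : Multigraph V E) : Prop :=
  G.ConnectedVia fun _ => True

/-- `G` is `k`-edge-connected: it is connected and has no edge cut of size less than `k`;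
equivalently, deleting any set of fewer than `k` edges leaves it connected. -/
def EdgeConnected (G : Multigraph V E) (k : ℕ) : Prop :=
  ∀ S : Set E, S.ncard < k → G.ConnectedVia fun e => e ∉ S

/-- The degree of a vertex (loops counted twice). -/
noncomputable def degree (G : Multigraph V E) (v : V) : ℕ :=
  {e | G.src e = v}.ncard + {e | G.tgt e = v}.ncard

/-- Every vertex has degree exactly 3. -/
def Cubic (G : Multigraph V E) : Prop :=
  ∀ v : V, G.degree v = 3

/-- `φ : E → Γ` is a flow: at every vertex, the sum over outgoing edges equals the
sum over incoming edges. -/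
def IsFlow [Fintype E] {Γ : Type} [AddCommGroup Γ] (G : Multigraph V E) (φ : E → Γ) : Prop :=
  ∀ v : V, (∑ e : E, if G.src e = v then φ e else 0) = ∑ e : E, if G.tgt e = v then φ e else 0

/-- The vertex `v` is an endpoint of some edge of `C`. -/
def touches (G : Multigraph V E) (C : Set E) (v : V) : Prop :=
  ∃ e ∈ C, G.src e = v ∨ G.tgt e = v

/-- An edge set `C` is (the edge set of) a cycle: it is nonempty, every vertex it touches
has degree exactly 2 in it, and it is connected. -/
def IsCycle (G : Multigraph V E) (C : Set E) : Prop :=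
  C.Nonempty ∧
  (∀ v : V, G.touches C v →
    ({e ∈ C | G.src e = v}.ncard + {e ∈ C | G.tgt e = v}.ncard = 2)) ∧
  (∀ u v : V, G.touches C u → G.touches C v → G.Reaches (· ∈ C) u v)

/-- `R` is `k`-closed: every cycle with at least one edge outside `R` has at least
`k+1` edges outside `R`. -/
def Closed (G : Multigraph V E) (k : ℕ) (R : Set E) : Prop :=
  ∀ C : Set E, G.IsCycle C → (C \ R).Nonempty → k + 1 ≤ (C \ R).ncard

/-- The `k`-closure `⟨S⟩ₖ` of `S` : the minimal `k`-closed set containing `S`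
(the family of `k`-closed sets is closed under intersections). -/
def kClosure (G : Multigraph V E) (k : ℕ) (S : Set E) : Set E :=
  ⋂₀ {R : Set E | S ⊆ R ∧ G.Closed k R}

/-- `S` is a `k`-base: its `k`-closure is the whole edge set. -/
def IsBase (G : Multigraph V E) (k : ℕ) (S : Set E) : Prop :=
  G.kClosure k S = Set.univ

/-- An edge set `S` is peripheral if `G − S` is connected. -/
def Peripheral (G : Multigraph V E) (S : Set E) : Prop :=
  G.ConnectedVia fun e => e ∉ S

/-- The spanning subgraph `(V, F)` is a forest, i.e. contains no cycle. -/
def IsForest (G : Multigraph V E) (F : Set E) : Prop :=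
  ∀ C : Set E, G.IsCycle C → ¬ C ⊆ F

/-- `vs`, `es` describe a path: distinct vertices `vs 0, …, vs n` and distinct edges
`es 0, …, es (n-1)` where `es i` joins `vs i` and `vs (i+1)`. -/
def IsPath (G : Multigraph V E) {n : ℕ} (vs : Fin (n + 1) → V) (es : Fin n → E) : Prop :=
  Function.Injective vs ∧ Function.Injective es ∧
  ∀ i : Fin n,
    (G.src (es i) = vs i.castSucc ∧ G.tgt (es i) = vs i.succ) ∨
    (G.src (es i) = vs i.succ ∧ G.tgt (es i) = vs i.castSucc)

/-- The edge `e` has `y` as one endpoint and its other endpoint in `X`,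
i.e. `e ∈ E(y, X)`. -/
def joins (G : Multigraph V E) (e : E) (y : V) (X : Set V) : Prop :=
  (G.src e = y ∧ G.tgt e ∈ X) ∨ (G.tgt e = y ∧ G.src e ∈ X)

/-- `W` is the vertex set of a connected component of `G − X`. -/
def IsComponent (G : Multigraph V E) (X W : Set V) : Prop :=
  W.Nonempty ∧ Disjoint W X ∧
  (∀ u ∈ W, ∀ v : V, v ∉ X → G.adjVia (fun _ => True) u v → v ∈ W) ∧
  (∀ u ∈ W, ∀ v ∈ W, G.Reaches (fun e => G.src e ∉ X ∧ G.tgt e ∉ X) u v)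

/-- The subgraph induced on `W`, with only those of its edges satisfying `P` kept,
is connected. -/
def ConnectedOn (G : Multigraph V E) (W : Set V) (P : E → Prop) : Prop :=
  ∀ u ∈ W, ∀ v ∈ W, G.Reaches (fun e => P e ∧ G.src e ∈ W ∧ G.tgt e ∈ W) u v

/-- The subgraph induced on `W` is `k`-edge-connected. -/
def EdgeConnectedOn (G : Multigraph V E) (W : Set V) (k : ℕ) : Prop :=
  ∀ S : Set E, S.ncard < k → G.ConnectedOn W fun e => e ∉ S

/-- Some cycle lies entirely inside the vertex set `X`. -/
def HasCycleIn (G : Multigraph V E) (X : Set V) : Prop :=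
  ∃ C : Set E, G.IsCycle C ∧ ∀ e ∈ C, G.src e ∈ X ∧ G.tgt e ∈ X

/-- The edge cut `E(X, V \ X)`. -/
def cutEdges (G : Multigraph V E) (X : Set V) : Set E :=
  {e | (G.src e ∈ X ∧ G.tgt e ∉ X) ∨ (G.src e ∉ X ∧ G.tgt e ∈ X)}

/-- A cubic graph is cyclically `k`-edge-connected if every edge cut separating two
cycle-containing parts has at least `k` edges. -/
def CyclicallyEdgeConnected (G : Multigraph V E) (k : ℕ) : Prop :=
  ∀ X : Set V, G.HasCycleIn X → G.HasCycleIn Xᶜ → k ≤ (G.cutEdges X).ncard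

/-- `G` is 3-connected: more than 3 vertices, connected, and still connected after
deleting any two vertices. -/
def ThreeConnected [Fintype V] (G : Multigraph V E) : Prop :=
  3 < Fintype.card V ∧ G.Connected ∧
    ∀ u v : V, G.ConnectedOn {w : V | w ≠ u ∧ w ≠ v} fun _ => True

/-- The graph `G − r` obtained by deleting the vertex `r` and all incident edges. -/
def deleteVertex (G : Multigraph V E) (r : V) :
    Multigraph {v : V // v ≠ r} {e : E // G.src e ≠ r ∧ G.tgt e ≠ r} where
  src e := ⟨G.src e.1, e.2.1⟩
  tgt e := ⟨G.tgt e.1, e.2.2⟩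

end Multigraph

/-!
For values in `Γ × Δ`, make the `Δ`-coordinate of a flow avoid `f` on most edges and use the
`Γ`-coordinate for the rest. Start from `X = V(C)` and `S = C`: values on the other edges inside `X`
can be avoided, rerouting along `C`. Now enlarge `X` step by step by a set `D ⊆ Xᶜ` that is minimal
subject to `D` and its complement in `Xᶜ` being connected and `D` sending at least two edges to `X`.
Because `G` is cubic and 3-edge-connected, such a `D` is either a last single vertex or each of its
vertices has a neighbour outside `X ∪ D`; either way `S ∪ E(D)` is again peripheral. Since
`3 ≤ |Δ|`, two edges between `D` and `X` give enough freedom to avoid `f` on all of them.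

In the end the `Δ`-coordinate avoids `f` off a peripheral set `S ⊇ C`. One of its translates by the
`|Δ|` flows along `C` agrees with `f` on at most a `1 / |Δ|` fraction of `C`. As `S` is peripheral,
the `Γ`-coordinate can be prescribed on `S`, so it is free on all other edges of `C`.
-/

namespace Multigraph

variable {V E : Type} {G : Multigraph V E}

/-! ### Links, edge sets and connected vertex sets -/

/-- The edge `e` joins `u` and `v`, in either direction; `G.adjVia P u v` asserts the existence of
such an edge satisfying `P`. -/
def IsLink (G : Multigraph V E) (e : E) (u v : V) : Prop :=
  (G.src e = u ∧ G.tgt e = v) ∨ (G.src e = v ∧ G.tgt e = u)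

/-- Adjacency: some edge, possibly a loop, joins `u` and `v`. -/
abbrev Adj (G : Multigraph V E) (u v : V) : Prop :=
  G.adjVia (fun _ => True) u v

/-- The edges incident with `v`. -/
def incident (G : Multigraph V E) (v : V) : Set E :=
  {e | G.src e = v ∨ G.tgt e = v}

/-- The edge set `E(A)` of the subgraph induced on `A`. -/
def inner (G : Multigraph V E) (A : Set V) : Set E :=
  {e | G.src e ∈ A ∧ G.tgt e ∈ A}

/-- The edge set `E(A, B)`, for arbitrary (possibly overlapping) `A` and `B`. -/
def between (G : Multigraph V E) (A B : Set V) : Set E :=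
  {e | ∃ a ∈ A, ∃ b ∈ B, G.IsLink e a b}

/-- The subgraph induced on `A` is connected; the empty set is allowed. -/
abbrev IsConn (G : Multigraph V E) (A : Set V) : Prop :=
  G.ConnectedOn A fun _ => True

/-- The vertex set of the connected component of `u` in the subgraph induced on `A`. -/
def comp (G : Multigraph V E) (A : Set V) (u : V) : Set V :=
  {w | w ∈ A ∧ G.Reaches (fun e => True ∧ e ∈ G.inner A) u w}

section Links

variable {A B X : Set V} {e : E} {u v w a b : V}

lemma isLink_src_tgt (e : E) : G.IsLink e (G.src e) (G.tgt e) :=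
  Or.inl ⟨rfl, rfl⟩

lemma IsLink.symm (h : G.IsLink e u v) : G.IsLink e v u :=
  Or.symm h

lemma IsLink.eq_and_eq_or_eq_and_eq (h : G.IsLink e u v) (h' : G.IsLink e a b) :
    (u = a ∧ v = b) ∨ (u = b ∧ v = a) := by
  rcases h with ⟨rfl, rfl⟩ | ⟨rfl, rfl⟩ <;> rcases h' with ⟨rfl, rfl⟩ | ⟨rfl, rfl⟩ <;> simp

lemma IsLink.right_unique (h : G.IsLink e u v) (h' : G.IsLink e u w) : v = w := by
  rcases h.eq_and_eq_or_eq_and_eq h' with ⟨-, h⟩ | ⟨h, h'⟩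
  exacts [h, h'.trans h]

lemma IsLink.mem_incident (h : G.IsLink e u v) : e ∈ G.incident u := by
  rcases h with ⟨rfl, _⟩ | ⟨_, rfl⟩
  exacts [Or.inl rfl, Or.inr rfl]

lemma IsLink.mem_inner_iff (h : G.IsLink e u v) : e ∈ G.inner A ↔ u ∈ A ∧ v ∈ A := by
  rcases h with ⟨rfl, rfl⟩ | ⟨rfl, rfl⟩
  exacts [Iff.rfl, and_comm]

lemma inner_mono (h : A ⊆ B) : G.inner A ⊆ G.inner B :=
  fun _ he => ⟨h he.1, h he.2⟩

lemma between_mono_left (h : A ⊆ B) : G.between A X ⊆ G.between B X :=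
  fun _ ⟨a, ha, hax⟩ => ⟨a, h ha, hax⟩

lemma between_subset_union_sdiff : G.between A X ⊆ G.between B X ∪ G.between (A \ B) X := by
  rintro e ⟨a, ha, hax⟩
  by_cases haB : a ∈ B
  exacts [Or.inl ⟨a, haB, hax⟩, Or.inr ⟨a, ⟨ha, haB⟩, hax⟩]

lemma ncard_between_le_add [Finite E] :
    (G.between A X).ncard ≤ (G.between B X).ncard + (G.between (A \ B) X).ncard :=
  (Set.ncard_le_ncard between_subset_union_sdiff).trans (Set.ncard_union_le _ _)

lemma disjoint_between_left (hAB : Disjoint A B) (hAX : Disjoint A X) :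
    Disjoint (G.between A X) (G.between B X) := by
  rw [Set.disjoint_left]
  rintro e ⟨a, ha, _, _, h⟩ ⟨b, hb, y, hy, h'⟩
  rcases h.eq_and_eq_or_eq_and_eq h' with ⟨rfl, -⟩ | ⟨rfl, -⟩
  exacts [Set.disjoint_left.1 hAB ha hb, Set.disjoint_left.1 hAX ha hy]

lemma disjoint_between_singleton_right (hAB : Disjoint A B) :
    Disjoint (G.between {v} A) (G.between {v} B) := by
  rw [Set.disjoint_left]
  rintro e ⟨_, rfl, a, ha, h⟩ ⟨_, rfl, b, hb, h'⟩
  exact Set.disjoint_left.1 hAB ha (h.right_unique h' ▸ hb)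

lemma disjoint_between_inner_left (hAB : Disjoint A B) :
    Disjoint (G.between A B) (G.inner A) := by
  rw [Set.disjoint_left]
  rintro e ⟨a, -, b, hb, h⟩ he
  exact Set.disjoint_left.1 hAB (h.mem_inner_iff.1 he).2 hb

lemma disjoint_between_inner_right (hAB : Disjoint A B) :
    Disjoint (G.between A B) (G.inner B) := by
  rw [Set.disjoint_left]
  rintro e ⟨a, ha, b, -, h⟩ he
  exact Set.disjoint_left.1 hAB ha (h.mem_inner_iff.1 he).1

lemma between_singleton_subset_incident : G.between {v} A ⊆ G.incident v := by
  rintro e ⟨_, rfl, _, _, h⟩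
  exact h.mem_incident

lemma cutEdges_eq_between (A : Set V) : G.cutEdges A = G.between A Aᶜ := by
  ext e
  constructor
  · rintro (⟨hs, ht⟩ | ⟨hs, ht⟩)
    exacts [⟨_, hs, _, ht, isLink_src_tgt e⟩, ⟨_, ht, _, hs, (isLink_src_tgt e).symm⟩]
  · rintro ⟨a, ha, b, hb, ⟨rfl, rfl⟩ | ⟨rfl, rfl⟩⟩
    exacts [Or.inl ⟨ha, hb⟩, Or.inr ⟨hb, ha⟩]

lemma between_eq_cutEdges_inter_inner (hAB : Disjoint A B) :
    G.between A B = G.cutEdges A ∩ G.inner (B ∪ A) := by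
  rw [cutEdges_eq_between]
  ext e
  constructor
  · rintro ⟨a, ha, b, hb, h⟩
    exact ⟨⟨a, ha, b, Set.disjoint_right.1 hAB hb, h⟩, h.mem_inner_iff.2 ⟨Or.inr ha, Or.inl hb⟩⟩
  · rintro ⟨⟨a, ha, b, hb, h⟩, he⟩
    exact ⟨a, ha, b, (h.mem_inner_iff.1 he).2.resolve_right hb, h⟩

lemma inner_union_subset : G.inner (A ∪ B) ⊆ G.inner A ∪ G.inner B ∪ G.between B A := by
  rintro e ⟨hs | hs, ht | ht⟩
  · exact Or.inl (Or.inl ⟨hs, ht⟩)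
  · exact Or.inr ⟨_, ht, _, hs, (isLink_src_tgt e).symm⟩
  · exact Or.inr ⟨_, hs, _, ht, isLink_src_tgt e⟩
  · exact Or.inl (Or.inr ⟨hs, ht⟩)

end Links

section Reachability

variable {P Q : E → Prop} {A B : Set V} {e : E} {u v w : V}

lemma adjVia.symm (h : G.adjVia P u v) : G.adjVia P v u :=
  h.imp fun _ he => he.imp_right Or.symm

lemma adjVia.reaches (h : G.adjVia P u v) : G.Reaches P u v :=
  Relation.ReflTransGen.single h

lemma IsLink.reaches (h : G.IsLink e u v) (he : P e) : G.Reaches P u v :=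
  adjVia.reaches ⟨e, he, h⟩

lemma Reaches.symm (h : G.Reaches P u v) : G.Reaches P v u :=
  haveI : Std.Symm (G.adjVia P) := ⟨fun _ _ => adjVia.symm⟩
  Relation.ReflTransGen.stdSymm.symm _ _ h

lemma Reaches.trans (h : G.Reaches P u v) (h' : G.Reaches P v w) : G.Reaches P u w :=
  Relation.ReflTransGen.trans h h'

lemma Reaches.mono (hPQ : ∀ e, P e → Q e) (h : G.Reaches P u v) : G.Reaches Q u v :=
  Relation.ReflTransGen.mono (fun _ _ ⟨e, he, h⟩ => ⟨e, hPQ e he, h⟩) _ _ h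

lemma IsLink.reaches_src_tgt (h : G.IsLink e u v) (huv : G.Reaches P u v) :
    G.Reaches P (G.src e) (G.tgt e) := by
  rcases h with ⟨rfl, rfl⟩ | ⟨rfl, rfl⟩
  exacts [huv, huv.symm]

lemma connectedVia_of_reaches (h : ∀ u, G.Reaches P u v) : G.ConnectedVia P :=
  ⟨⟨v⟩, fun a b => (h a).trans (h b).symm⟩

lemma Reaches.exists_adjVia_of_mem_of_notMem (h : G.Reaches P u v) (hu : u ∈ B) (hv : v ∉ B) :
    ∃ c ∈ B, ∃ d ∉ B, G.adjVia P c d := by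
  induction h using Relation.ReflTransGen.head_induction_on with
  | refl => exact absurd hu hv
  | @head a c hac _ ih =>
    by_cases hc : c ∈ B
    exacts [ih hc, ⟨a, hu, c, hc, hac⟩]

lemma Reaches.exists_notMem_reaches_notMem_inner (h : G.Reaches P u v) (hv : v ∉ A) :
    ∃ w ∉ A, G.Reaches (fun e => P e ∧ e ∉ G.inner Aᶜ) u w := by
  by_contra! hstay
  obtain ⟨c, hc, d, hd, e, he, hcd⟩ := h.exists_adjVia_of_mem_of_notMem
    (B := {w | G.Reaches (fun e => P e ∧ e ∉ G.inner Aᶜ) u w}) Relation.ReflTransGen.refl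
    (hstay v hv)
  have hcA : c ∈ A := not_not.1 fun h => hstay c h hc
  exact hd (hc.trans (IsLink.reaches hcd ⟨he, fun h => (IsLink.mem_inner_iff hcd).1 h |>.1 hcA⟩))

lemma isConn_empty : G.IsConn ∅ := fun _ hu => hu.elim

lemma isConn_singleton (v : V) : G.IsConn {v} := by
  rintro _ rfl _ rfl
  exact Relation.ReflTransGen.refl

lemma isConn_of_reaches (h : ∀ u ∈ A, G.Reaches (fun e => True ∧ e ∈ G.inner A) u v) :
    G.IsConn A :=
  fun a ha b hb => (h a ha).trans (h b hb).symm

lemma IsLink.reaches_inner (h : G.IsLink e u v) (hu : u ∈ A) (hv : v ∈ A) :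
    G.Reaches (fun e => True ∧ e ∈ G.inner A) u v :=
  h.reaches ⟨trivial, h.mem_inner_iff.2 ⟨hu, hv⟩⟩

lemma IsConn.reaches_of_subset (hA : G.IsConn A) (hAB : A ⊆ B) (hu : u ∈ A) (hv : v ∈ A) :
    G.Reaches (fun e => True ∧ e ∈ G.inner B) u v :=
  Reaches.mono (fun _ he => ⟨trivial, inner_mono hAB he.2⟩) (hA u hu v hv)

lemma IsConn.reaches (hA : G.IsConn A) (hAP : ∀ e ∈ G.inner A, P e) (hu : u ∈ A) (hv : v ∈ A) :
    G.Reaches P u v :=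
  Reaches.mono (fun e he => hAP e he.2) (hA u hu v hv)

lemma IsConn.union (hA : G.IsConn A) (hB : G.IsConn B) (hv : v ∈ A ∩ B) : G.IsConn (A ∪ B) := by
  apply isConn_of_reaches (v := v)
  rintro u (hu | hu)
  exacts [hA.reaches_of_subset Set.subset_union_left hu hv.1,
    hB.reaches_of_subset Set.subset_union_right hu hv.2]

lemma IsConn.union_of_adj (hA : G.IsConn A) (hB : G.IsConn B) (hu : u ∈ A) (hv : v ∈ B)
    (h : G.Adj u v) : G.IsConn (A ∪ B) := by
  obtain ⟨e, -, he⟩ := h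
  apply isConn_of_reaches (v := u)
  rintro w (hw | hw)
  · exact hA.reaches_of_subset Set.subset_union_left hw hu
  · exact (hB.reaches_of_subset Set.subset_union_right hw hv).trans
      (IsLink.symm he |>.reaches_inner (Or.inr hv) (Or.inl hu))

lemma IsConn.insert_of_adj (hA : G.IsConn A) (hu : u ∈ A) (h : G.Adj u v) :
    G.IsConn (insert v A) := by
  rw [Set.insert_eq, Set.union_comm]
  exact hA.union_of_adj (isConn_singleton v) hu rfl h

lemma IsConn.exists_adj (hA : G.IsConn A) (hu : u ∈ A ∩ B) (hv : v ∈ A \ B) :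
    ∃ c ∈ A ∩ B, ∃ d ∈ A \ B, G.Adj c d := by
  obtain ⟨c, hc, d, hd, e, ⟨-, he⟩, hcd⟩ :=
    Reaches.exists_adjVia_of_mem_of_notMem (hA u hu.1 v hv.1) hu.2 hv.2
  have hcdA := (IsLink.mem_inner_iff hcd).1 he
  exact ⟨c, ⟨hcdA.1, hc⟩, d, ⟨hcdA.2, hd⟩, e, trivial, hcd⟩

lemma comp_subset : G.comp A u ⊆ A := fun _ h => h.1

lemma notMem_comp_sdiff_singleton : v ∉ G.comp (A \ {v}) u := fun h => h.1.2 rfl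

lemma mem_comp_self (hu : u ∈ A) : u ∈ G.comp A u :=
  ⟨hu, Relation.ReflTransGen.refl⟩

lemma mem_comp_of_isLink (hv : v ∈ G.comp A u) (hw : w ∈ A) (h : G.IsLink e v w) :
    w ∈ G.comp A u :=
  ⟨hw, hv.2.trans (h.reaches_inner hv.1 hw)⟩

lemma comp_mono (h : A ⊆ B) : G.comp A u ⊆ G.comp B u :=
  fun _ hw => ⟨h hw.1, hw.2.mono fun _ he => ⟨trivial, inner_mono h he.2⟩⟩

lemma IsConn.subset_comp (hB : G.IsConn B) (hBA : B ⊆ A) (hv : v ∈ B) (hvu : v ∈ G.comp A u) :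
    B ⊆ G.comp A u :=
  fun _ hw => ⟨hBA hw, hvu.2.trans (hB.reaches_of_subset hBA hv hw)⟩

lemma isConn_comp : G.IsConn (G.comp A u) := by
  refine isConn_of_reaches (v := u) fun w hw => Reaches.symm ?_
  obtain ⟨-, h⟩ := hw
  induction h with
  | refl => exact Relation.ReflTransGen.refl
  | @tail b c hb hbc ih =>
    obtain ⟨e, ⟨-, he⟩, hlink⟩ := hbc
    obtain ⟨hbA, hcA⟩ := (IsLink.mem_inner_iff hlink).1 he
    have hbu : b ∈ G.comp A u := ⟨hbA, hb⟩
    exact ih.trans (IsLink.reaches_inner hlink hbu (mem_comp_of_isLink hbu hcA hlink))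

lemma IsConn.sdiff_comp (hA : G.IsConn A) (hv : v ∈ A) :
    G.IsConn (A \ G.comp (A \ {v}) u) := by
  refine isConn_of_reaches (v := v) fun w hw => ?_
  have h := hA w hw.1 v hv
  induction h using Relation.ReflTransGen.head_induction_on with
  | refl => exact Relation.ReflTransGen.refl
  | @head a c hac _ ih =>
    obtain ⟨e, ⟨-, he⟩, hlink⟩ := hac
    have hcA := ((IsLink.mem_inner_iff hlink).1 he).2
    by_cases hav : a = v
    · subst hav
      exact Relation.ReflTransGen.refl
    have hc : c ∈ A \ G.comp (A \ {v}) u :=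
      ⟨hcA, fun hc => hw.2 (mem_comp_of_isLink hc ⟨hw.1, hav⟩ (IsLink.symm hlink))⟩
    exact (IsLink.reaches_inner hlink hw hc).trans (ih hc)

/-- Two cut vertices `u`, `v` of `A` that see each other from `w` cut off disjoint branches. -/
lemma IsConn.sdiff_comp_subset_comp (hA : G.IsConn A) (hu : u ∈ A)
    (huv : u ∈ G.comp (A \ {v}) w) (hvu : v ∈ G.comp (A \ {u}) w) :
    A \ G.comp (A \ {u}) w ⊆ G.comp (A \ {v}) w := by
  refine (hA.sdiff_comp hu).subset_comp (fun z hz => ⟨hz.1, ?_⟩)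
    ⟨hu, notMem_comp_sdiff_singleton⟩ huv
  rintro rfl
  exact hz.2 hvu

lemma IsConn.exists_isConn_sdiff_singleton [Finite V] (hA : G.IsConn A) (hne : A.Nonempty) :
    ∃ v ∈ A, G.IsConn (A \ {v}) := by
  obtain ⟨B, ⟨hBA, hB⟩, hmax⟩ := (Set.toFinite {B : Set V | B ⊂ A ∧ G.IsConn B}).exists_maximal
    ⟨∅, Set.empty_ssubset.2 hne, isConn_empty⟩
  obtain ⟨v, hv, hconn⟩ : ∃ v ∈ A \ B, G.IsConn (insert v B) := by
    obtain ⟨w, hw⟩ := Set.exists_of_ssubset hBA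
    rcases B.eq_empty_or_nonempty with rfl | ⟨b, hb⟩
    · exact ⟨w, hw, by simpa using isConn_singleton w⟩
    · obtain ⟨c, hc, d, hd, hcd⟩ := hA.exists_adj ⟨hBA.1 hb, hb⟩ hw
      exact ⟨d, hd, hB.insert_of_adj hc.2 hcd⟩
  have hins : insert v B = A := by
    by_contra hne'
    exact hv.2 (hmax ⟨(Set.insert_subset hv.1 hBA.1).ssubset_of_ne hne', hconn⟩
      (Set.subset_insert v B) (Set.mem_insert v B))
  refine ⟨v, hv.1, ?_⟩
  rwa [← hins, Set.insert_sdiff_self_of_notMem hv.2]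

end Reachability

/-! ### Degrees and cuts -/

section Cuts

variable {k : ℕ} {v : V} {A B X U : Set V}

lemma EdgeConnected.le_ncard_cutEdges (hG : G.EdgeConnected k) (hU : U.Nonempty)
    (hU' : Uᶜ.Nonempty) : k ≤ (G.cutEdges U).ncard := by
  obtain ⟨⟨u, hu⟩, ⟨w, hw⟩⟩ := And.intro hU hU'
  by_contra! hlt
  obtain ⟨c, hc, d, hd, e, he, hcd⟩ :=
    ((hG _ hlt).2 u w).exists_adjVia_of_mem_of_notMem hu hw
  exact he (cutEdges_eq_between U ▸ ⟨c, hc, d, hd, hcd⟩)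

lemma Cubic.ncard_incident_le (hcubic : G.Cubic) (v : V) : (G.incident v).ncard ≤ 3 :=
  (Set.ncard_union_le {e | G.src e = v} {e | G.tgt e = v}).trans_eq (hcubic v)

lemma Cubic.ncard_between_add_add_le [Finite E] (hcubic : G.Cubic) (hAB : Disjoint A B)
    (hAX : Disjoint A X) (hBX : Disjoint B X) :
    (G.between {v} A).ncard + (G.between {v} B).ncard + (G.between {v} X).ncard ≤ 3 := by
  rw [← Set.ncard_union_eq (disjoint_between_singleton_right hAB),
    ← Set.ncard_union_eq (Set.disjoint_union_left.2
      ⟨disjoint_between_singleton_right hAX, disjoint_between_singleton_right hBX⟩)]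
  exact (Set.ncard_le_ncard (Set.union_subset (Set.union_subset between_singleton_subset_incident
    between_singleton_subset_incident) between_singleton_subset_incident)).trans
    (hcubic.ncard_incident_le v)

end Cuts

/-! ### Nonseparating sets -/

section Minimal

variable {W : Set V}

/-- Minimality: moving `v` and all but one of the branches at `v` to the other side keeps both
sides connected. -/
lemma exists_minimal_nonseparating [Finite V] {p : Set V → Prop} (hW : G.IsConn W) (hpW : p W) :
    ∃ D ⊆ W, G.IsConn D ∧ G.IsConn (W \ D) ∧ p D ∧
      ∀ v ∈ D, G.IsConn (insert v (W \ D)) → ∀ u, ¬ p (G.comp (D \ {v}) u) := by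
  obtain ⟨D, ⟨hDW, hD, hWD, hpD⟩, hmin⟩ := (Set.toFinite {D : Set V |
    D ⊆ W ∧ G.IsConn D ∧ G.IsConn (W \ D) ∧ p D}).exists_minimal
    ⟨W, subset_rfl, hW, by simpa using isConn_empty, hpW⟩
  refine ⟨D, hDW, hD, hWD, hpD, fun v hv hins u hpF => ?_⟩
  have hFD : G.comp (D \ {v}) u ⊆ D := comp_subset.trans Set.sdiff_subset
  have hsplit : W \ G.comp (D \ {v}) u = D \ G.comp (D \ {v}) u ∪ insert v (W \ D) := by
    ext w
    by_cases hw : w ∈ D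
    · have : w = v → w ∉ G.comp (D \ {v}) u := by
        rintro rfl
        exact notMem_comp_sdiff_singleton
      simp [hw, hDW hw]
      tauto
    · have : w ≠ v := fun h => hw (h ▸ hv)
      simp [hw, this, mt (@hFD w) hw]
  have hconn : G.IsConn (W \ G.comp (D \ {v}) u) :=
    hsplit ▸ (hD.sdiff_comp hv).union hins
      ⟨⟨hv, notMem_comp_sdiff_singleton⟩, Set.mem_insert v _⟩
  exact notMem_comp_sdiff_singleton (hmin ⟨hFD.trans hDW, isConn_comp, hconn, hpF⟩ hFD hv)

end Minimal

section Tight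

variable {X D : Set V} {p v : V} {e e' g : E}

/-- The vertices of `D` with a neighbour outside `D ∪ X`. -/
def attachments (G : Multigraph V E) (X D : Set V) : Set V :=
  {v ∈ D | ∃ m ∉ D ∪ X, G.Adj v m}

/-- A connected set `D` disjoint from `X` that sends at least two edges to `X`, whereas every
component left after deleting an attachment of `D` sends at most one. -/
structure IsTight (G : Multigraph V E) (X D : Set V) : Prop where
  disjoint : Disjoint D X
  isConn : G.IsConn D
  two_le : 2 ≤ (G.between D X).ncard
  le_one : ∀ v ∈ G.attachments X D, ∀ u, (G.between (G.comp (D \ {v}) u) X).ncard ≤ 1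

/-- The component of `p` among the vertices of `D` that are not attachments. -/
def core (G : Multigraph V E) (X D : Set V) (p : V) : Set V :=
  G.comp (D \ G.attachments X D) p

/-- The part of `D` that `v` separates from `p`, including `v` itself. -/
def branch (G : Multigraph V E) (D : Set V) (p v : V) : Set V :=
  D \ G.comp (D \ {v}) p

/-- The edge `g` to `X` is an exit of the cut edge `e` of the core: either `e` itself leads to `X`,
or `e` leads to an attachment `v` and `g` leaves the branch at `v`. -/
def IsExit (G : Multigraph V E) (X D : Set V) (p : V) (e g : E) : Prop :=
  (e ∈ G.between (G.core X D p) X ∧ g = e) ∨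
    ∃ v ∈ G.attachments X D, e ∈ G.between {v} (G.core X D p) ∧ g ∈ G.between (G.branch D p v) X

lemma core_subset : G.core X D p ⊆ D :=
  comp_subset.trans Set.sdiff_subset

lemma core_subset_comp (hv : v ∈ G.attachments X D) : G.core X D p ⊆ G.comp (D \ {v}) p :=
  comp_mono (Set.sdiff_subset_sdiff_right (Set.singleton_subset_iff.2 hv))

lemma mem_branch_self (hv : v ∈ D) : v ∈ G.branch D p v :=
  ⟨hv, notMem_comp_sdiff_singleton⟩

lemma mem_between_core_or_of_mem_cutEdges (he : e ∈ G.cutEdges (G.core X D p)) :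
    e ∈ G.between (G.core X D p) X ∨
      ∃ v ∈ G.attachments X D, e ∈ G.between {v} (G.core X D p) := by
  obtain ⟨w, hw, o, ho, hwo⟩ := cutEdges_eq_between (G.core X D p) ▸ he
  by_cases hoX : o ∈ X
  · exact Or.inl ⟨w, hw, o, hoX, hwo⟩
  by_cases hoD : o ∈ D
  · exact Or.inr ⟨o, not_not.1 fun hoN => ho (mem_comp_of_isLink hw ⟨hoD, hoN⟩ hwo),
      o, rfl, w, hw, hwo.symm⟩
  · exact absurd ⟨core_subset hw, o, by simp [hoX, hoD], e, trivial, hwo⟩ hw.1.2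

namespace IsTight

lemma disjoint_between_comp_between_branch (hD : G.IsTight X D) :
    Disjoint (G.between (G.comp (D \ {v}) p) X) (G.between (G.branch D p v) X) :=
  disjoint_between_left Set.disjoint_sdiff_right
    (hD.disjoint.mono_left (comp_subset.trans Set.sdiff_subset))

variable [Finite E]

lemma between_branch_nonempty (hD : G.IsTight X D) (hv : v ∈ G.attachments X D) :
    (G.between (G.branch D p v) X).Nonempty := by
  by_contra! hempty
  have := ncard_between_le_add (G := G) (A := D) (B := G.comp (D \ {v}) p) (X := X)
  rw [show D \ G.comp (D \ {v}) p = G.branch D p v from rfl, hempty, Set.ncard_empty] at this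
  have := hD.two_le
  have := hD.le_one v hv p
  omega

lemma between_singleton_branch_union_nonempty (hD : G.IsTight X D) (hv : v ∈ G.attachments X D) :
    (G.between {v} (G.branch D p v ∪ X)).Nonempty := by
  obtain ⟨g, d, hd, x, hx, hdx⟩ := hD.between_branch_nonempty (p := p) hv
  obtain rfl | hdv := eq_or_ne d v
  · exact ⟨g, d, rfl, x, Or.inr hx, hdx⟩
  · obtain ⟨_, ⟨-, rfl⟩, o, ho, h, -, hvo⟩ := (hD.isConn.sdiff_comp (u := p) hv.1).exists_adj
      (B := {v}) ⟨mem_branch_self hv.1, rfl⟩ ⟨hd, hdv⟩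
    exact ⟨h, _, rfl, o, Or.inl ho.1, hvo⟩

/-- Of the three edges at `v`, one leaves `D ∪ X` and one stays on the branch's side. -/
lemma ncard_between_singleton_core_le_one (hD : G.IsTight X D) (hcubic : G.Cubic)
    (hv : v ∈ G.attachments X D) : (G.between {v} (G.core X D p)).ncard ≤ 1 := by
  have hout : (G.between {v} (D ∪ X)ᶜ).Nonempty := by
    obtain ⟨-, m, hm, e, -, hvm⟩ := hv
    exact ⟨e, v, rfl, m, hm, hvm⟩
  have hin := hD.between_singleton_branch_union_nonempty (p := p) hv
  rw [← Set.ncard_pos] at hout hin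
  have hbranch : G.branch D p v ∪ X ⊆ D ∪ X := Set.union_subset_union_left X Set.sdiff_subset
  have hcore : Disjoint (G.core X D p) (G.branch D p v ∪ X) :=
    Set.disjoint_union_right.2
      ⟨Set.disjoint_sdiff_right.mono_left (core_subset_comp hv), hD.disjoint.mono_left core_subset⟩
  have := hcubic.ncard_between_add_add_le (v := v) hcore
    (disjoint_compl_right.mono_left (core_subset.trans Set.subset_union_left))
    (disjoint_compl_right.mono_left hbranch)
  omega

lemma exists_isExit (hD : G.IsTight X D) (he : e ∈ G.cutEdges (G.core X D p)) :
    ∃ g, G.IsExit X D p e g := by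
  rcases mem_between_core_or_of_mem_cutEdges he with heX | ⟨v, hv, hev⟩
  · exact ⟨e, Or.inl ⟨heX, rfl⟩⟩
  · obtain ⟨g, hg⟩ := hD.between_branch_nonempty (p := p) hv
    exact ⟨g, Or.inr ⟨v, hv, hev, hg⟩⟩

/-- Branches at different attachments are disjoint. -/
lemma mem_between_comp_of_isExit (hD : G.IsTight X D) (hcubic : G.Cubic)
    (hv : v ∈ G.attachments X D) (hev : e ∈ G.between {v} (G.core X D p))
    (hg : G.IsExit X D p e' g) (hee' : e ≠ e') :
    g ∈ G.between (G.comp (D \ {v}) p) X := by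
  rcases hg with ⟨he'X, rfl⟩ | ⟨v', hv', he'v', hg⟩
  · exact between_mono_left (core_subset_comp hv) he'X
  · have hvv' : v ≠ v' := by
      rintro rfl
      exact hee' ((Set.ncard_le_one_iff).1
        (hD.ncard_between_singleton_core_le_one hcubic hv) hev he'v')
    obtain ⟨_, rfl, w, hw, hvw⟩ := hev
    obtain ⟨_, rfl, w', hw', hvw'⟩ := he'v'
    exact between_mono_left (hD.isConn.sdiff_comp_subset_comp hv'.1
      (mem_comp_of_isLink (core_subset_comp hv hw') ⟨hv'.1, hvv'.symm⟩ hvw'.symm)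
      (mem_comp_of_isLink (core_subset_comp hv' hw) ⟨hv.1, hvv'⟩ hvw.symm)) hg

lemma eq_of_isExit (hD : G.IsTight X D) (hcubic : G.Cubic) (hg : G.IsExit X D p e g)
    (hg' : G.IsExit X D p e' g) : e = e' := by
  by_contra! hee'
  have hdisj {v : V} :=
    Set.disjoint_left.1 (hD.disjoint_between_comp_between_branch (p := p) (v := v))
  rcases id hg with ⟨-, rfl⟩ | ⟨v, hv, hev, hgv⟩
  · rcases id hg' with ⟨-, rfl⟩ | ⟨v', hv', hev', hgv'⟩
    · exact hee' rfl
    · exact hdisj (hD.mem_between_comp_of_isExit hcubic hv' hev' hg hee'.symm) hgv'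
  · exact hdisj (hD.mem_between_comp_of_isExit hcubic hv hev hg' hee') hgv

/-- At least three edges leave the core, at most one of them towards `X`. If `e₁` leads to the
attachment `v₁`, then the exits of the other two are distinct edges from the component of the core
in `D \ {v₁}` to `X`. -/
lemma attachments_eq (hD : G.IsTight X D) (hG : G.EdgeConnected 3) (hcubic : G.Cubic)
    (hne : (G.attachments X D).Nonempty) : G.attachments X D = D := by
  by_contra hND
  obtain ⟨p, hpD, hpN⟩ := Set.exists_of_ssubset
    (Set.ssubset_iff_subset_ne.2 ⟨Set.sep_subset D _, hND⟩)
  obtain ⟨n, hn⟩ := hne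
  have hcut : 3 ≤ (G.cutEdges (G.core X D p)).ncard :=
    hG.le_ncard_cutEdges ⟨p, mem_comp_self ⟨hpD, hpN⟩⟩ ⟨n, fun h => h.1.2 hn⟩
  have hcoreX : (G.between (G.core X D p) X).ncard ≤ 1 :=
    (Set.ncard_le_ncard (between_mono_left (core_subset_comp hn))).trans (hD.le_one n hn p)
  obtain ⟨e₁, he₁, he₁X⟩ := Set.exists_mem_notMem_of_ncard_lt_ncard (hcoreX.trans_lt
    (one_lt_two.trans hcut))
  obtain ⟨v₁, hv₁, hev₁⟩ := (mem_between_core_or_of_mem_cutEdges he₁).resolve_left he₁X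
  choose! exit hexit using fun e he => hD.exists_isExit (p := p) (e := e) he
  have hle : (G.cutEdges (G.core X D p) \ {e₁}).ncard ≤
      (G.between (G.comp (D \ {v₁}) p) X).ncard :=
    Set.ncard_le_ncard_of_injOn exit
      (fun e he => hD.mem_between_comp_of_isExit hcubic hv₁ hev₁ (hexit e he.1) (Ne.symm he.2))
      fun e he e' he' h => hD.eq_of_isExit hcubic (hexit e he.1) (h ▸ hexit e' he'.1)
  have := Set.ncard_sdiff_singleton_add_one he₁
  have := hD.le_one v₁ hv₁ p
  omega

end IsTight
end Tight

section Nonseparating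

variable {X : Set V}

lemma EdgeConnected.le_ncard_between_compl {k : ℕ} (hG : G.EdgeConnected k) (hX : X.Nonempty)
    (hXc : Xᶜ.Nonempty) : k ≤ (G.between Xᶜ X).ncard := by
  simpa [cutEdges_eq_between] using hG.le_ncard_cutEdges hXc ((compl_compl X).symm ▸ hX)

lemma EdgeConnected.subsingleton_compl [Finite V] [Finite E] (hG : G.EdgeConnected 3)
    (hX : X.Nonempty) (hW : G.IsConn Xᶜ)
    (hle : ∀ v ∈ Xᶜ, ∀ u, (G.between (G.comp (Xᶜ \ {v}) u) X).ncard ≤ 1) :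
    Xᶜ.Subsingleton := by
  by_contra hns
  rw [Set.not_subsingleton_iff] at hns
  obtain ⟨v, hv, hvW⟩ := hW.exists_isConn_sdiff_singleton hns.nonempty
  obtain ⟨w, hw, hwv⟩ := hns.exists_ne v
  have hrest : (G.between (Xᶜ \ {v}) X).ncard ≤ 1 :=
    (Set.ncard_le_ncard (between_mono_left
      (hvW.subset_comp subset_rfl ⟨hw, hwv⟩ (mem_comp_self ⟨hw, hwv⟩)))).trans (hle v hv w)
  have hvcomp : v ∈ G.comp (Xᶜ \ {w}) v := mem_comp_self ⟨hv, hwv.symm⟩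
  have hsingle : (G.between {v} X).ncard ≤ 1 :=
    (Set.ncard_le_ncard (between_mono_left (Set.singleton_subset_iff.2 hvcomp))).trans
      (hle w hw v)
  have hsplit := ncard_between_le_add (G := G) (A := Xᶜ) (B := {v}) (X := X)
  have := hG.le_ncard_between_compl hX hns.nonempty
  omega

lemma exists_nonseparating [Finite V] [Finite E] (hG : G.EdgeConnected 3) (hcubic : G.Cubic)
    (hX : X.Nonempty) (hXc : Xᶜ.Nonempty) (hW : G.IsConn Xᶜ) :
    ∃ D ⊆ Xᶜ, G.IsConn D ∧ G.IsConn (Xᶜ \ D) ∧ 2 ≤ (G.between D X).ncard ∧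
      (D = Xᶜ ∧ D.Subsingleton ∨
        (Xᶜ \ D).Nonempty ∧ ∀ d ∈ D, ∃ m ∈ Xᶜ \ D, G.Adj d m) := by
  obtain ⟨D, hDW, hD, hWD, hDX, hmin⟩ :=
    exists_minimal_nonseparating (p := fun D => 2 ≤ (G.between D X).ncard) hW
      (le_trans (by norm_num) (hG.le_ncard_between_compl hX hXc))
  simp only [not_le, Nat.lt_succ_iff] at hmin
  refine ⟨D, hDW, hD, hWD, hDX, ?_⟩
  rcases (Xᶜ \ D).eq_empty_or_nonempty with hempty | ⟨m, hm⟩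
  · obtain rfl := hDW.antisymm (Set.sdiff_eq_empty.1 hempty)
    refine Or.inl ⟨rfl, hG.subsingleton_compl hX hW fun v hv => hmin v hv ?_⟩
    simpa using isConn_singleton v
  · have hout {m : V} : m ∉ D ∪ X ↔ m ∈ Xᶜ \ D := by simp [and_comm]
    have htight : G.IsTight X D := by
      refine ⟨Set.subset_compl_iff_disjoint_right.1 hDW, hD, hDX, ?_⟩
      rintro v ⟨hv, m, hm, hvm⟩
      exact hmin v hv (hWD.insert_of_adj (hout.1 hm) hvm.symm)
    obtain ⟨d, hd⟩ : D.Nonempty := by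
      by_contra! h
      simp [h, between] at hDX
    obtain ⟨c, hc, m', hm', hcm⟩ := hW.exists_adj ⟨hDW hd, hd⟩ hm
    have hall := htight.attachments_eq hG hcubic ⟨c, hc.2, m', hout.2 hm', hcm⟩
    refine Or.inr ⟨⟨m, hm⟩, fun d hd => ?_⟩
    obtain ⟨-, m, hm, hdm⟩ := hall.symm ▸ hd
    exact ⟨m, hout.1 hm, hdm⟩

end Nonseparating

/-! ### Flows -/

section Flows

variable [Fintype E] {Γ Δ : Type} [AddCommGroup Γ] [AddCommGroup Δ] {P : E → Prop} {A : Set V}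
  {φ ψ : E → Γ} {e : E} {u v : V}

/-- The boundary operator on `Γ`-weightings of the edges: net outflow at each vertex. Its kernel
consists of the flows. -/
noncomputable def boundary (G : Multigraph V E) (Γ : Type) [AddCommGroup Γ] :
    (E → Γ) →+ (V → Γ) :=
  ∑ e, (AddMonoidHom.single (fun _ => Γ) (G.src e) -
    AddMonoidHom.single (fun _ => Γ) (G.tgt e)).comp (Pi.evalAddMonoidHom _ e)

lemma boundary_eq_sum (φ : E → Γ) :
    G.boundary Γ φ = ∑ e, (Pi.single (G.src e) (φ e) - Pi.single (G.tgt e) (φ e)) := by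
  simp [boundary]

lemma isFlow_iff_boundary_eq_zero : G.IsFlow φ ↔ G.boundary Γ φ = 0 := by
  rw [funext_iff]
  refine forall_congr' fun v => ?_
  simp [boundary_eq_sum, Pi.single_apply, sub_eq_zero, eq_comm (a := v)]

lemma IsFlow.add (hφ : G.IsFlow φ) (hψ : G.IsFlow ψ) : G.IsFlow (φ + ψ) := by
  rw [isFlow_iff_boundary_eq_zero] at *
  rw [map_add, hφ, hψ, add_zero]

lemma IsFlow.sub (hφ : G.IsFlow φ) (hψ : G.IsFlow ψ) : G.IsFlow (φ - ψ) := by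
  rw [isFlow_iff_boundary_eq_zero] at *
  rw [map_sub, hφ, hψ, sub_zero]

lemma IsFlow.prodMk {ψ : E → Δ} (hφ : G.IsFlow φ) (hψ : G.IsFlow ψ) :
    G.IsFlow fun e => (φ e, ψ e) := by
  intro v
  ext
  · simpa [Prod.fst_sum, apply_ite Prod.fst] using hφ v
  · simpa [Prod.snd_sum, apply_ite Prod.snd] using hψ v

lemma boundary_single (e : E) (γ : Γ) : G.boundary Γ (Pi.single e γ) =
    Pi.single (G.src e) γ - Pi.single (G.tgt e) γ := by
  rw [boundary_eq_sum, Finset.sum_eq_single e]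
  · simp
  · intro e' _ he'
    simp [he']
  · simp

lemma Reaches.exists_boundary_eq (h : G.Reaches P u v) (γ : Γ) :
    ∃ φ : E → Γ, (∀ e, ¬ P e → φ e = 0) ∧ G.boundary Γ φ = Pi.single u γ - Pi.single v γ := by
  induction h with
  | refl => exact ⟨0, fun _ _ => rfl, by simp⟩
  | @tail b c _ hbc ih =>
    obtain ⟨φ, hφ, hφb⟩ := ih
    obtain ⟨e, he, hlink⟩ := hbc
    obtain ⟨δ, hδ⟩ : ∃ δ : Γ, G.boundary Γ (Pi.single e δ) = Pi.single b γ - Pi.single c γ := by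
      rcases hlink with ⟨rfl, rfl⟩ | ⟨rfl, rfl⟩
      · exact ⟨γ, boundary_single e γ⟩
      · exact ⟨-γ, by rw [Pi.single_neg, map_neg, boundary_single, neg_sub]⟩
    refine ⟨φ + Pi.single e δ, fun e' he' => ?_, by rw [map_add, hφb, hδ, sub_add_sub_cancel]⟩
    have hne : e' ≠ e := fun h => he' (h ▸ he)
    simp [hφ e' he', hne]

lemma exists_isFlow_eq_of_reaches (τ : E → Γ)
    (hτ : ∀ e, τ e ≠ 0 → G.Reaches P (G.src e) (G.tgt e)) :
    ∃ φ : E → Γ, G.IsFlow φ ∧ ∀ e, ¬ P e → φ e = τ e := by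
  have hcancel : ∀ e, ∃ π : E → Γ, (∀ e', ¬ P e' → π e' = 0) ∧
      G.boundary Γ π = G.boundary Γ (Pi.single e (τ e)) := by
    intro e
    by_cases he : τ e = 0
    · exact ⟨0, fun _ _ => rfl, by simp [he]⟩
    · simpa only [boundary_single] using (hτ e he).exists_boundary_eq (τ e)
  choose π hπ hπb using hcancel
  refine ⟨τ - ∑ e, π e, ?_, fun e he => ?_⟩
  · rw [isFlow_iff_boundary_eq_zero, map_sub, map_sum, ← Finset.univ_sum_single τ, map_sum]
    simp [hπb]
  · simp [hπ _ e he]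

variable [Finite V]

lemma IsFlow.sum_ite_src_eq_sum_ite_tgt (hφ : G.IsFlow φ) (A : Set V) :
    (∑ e, if G.src e ∈ A then φ e else 0) = ∑ e, if G.tgt e ∈ A then φ e else 0 := by
  have := Fintype.ofFinite V
  have h := Finset.sum_congr (rfl : A.toFinset = A.toFinset) fun v _ => hφ v
  simpa [Finset.sum_comm (s := A.toFinset)] using h

lemma IsFlow.eq_zero_of_mem_cutEdges (hφ : G.IsFlow φ) (he : e ∈ G.cutEdges A)
    (h : ∀ e' ∈ G.cutEdges A, e' ≠ e → φ e' = 0) : φ e = 0 := by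
  have hbalance := sub_eq_zero.2 (hφ.sum_ite_src_eq_sum_ite_tgt A)
  rw [← Finset.sum_sub_distrib, Finset.sum_eq_single e _ (by simp)] at hbalance
  · rcases he with ⟨hs, ht⟩ | ⟨hs, ht⟩ <;> simpa [hs, ht] using hbalance
  · intro e' _ hne
    by_cases hs : G.src e' ∈ A <;> by_cases ht : G.tgt e' ∈ A
    · simp [hs, ht]
    · simp [hs, ht, h e' (Or.inl ⟨hs, ht⟩) hne]
    · simp [hs, ht, h e' (Or.inr ⟨hs, ht⟩) hne]
    · simp [hs, ht]

end Flows

section Between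

variable [Fintype E] {Γ : Type} [AddCommGroup Γ] {X D : Set V} {e₀ : E}

lemma exists_isFlow_eqOn_between (hDX : Disjoint D X) (hX : G.IsConn X) (hD : G.IsConn D)
    (he₀ : e₀ ∈ G.between D X) (g : E → Γ) :
    ∃ ψ : E → Γ, G.IsFlow ψ ∧ (∀ e ∈ G.between D X, e ≠ e₀ → ψ e = g e) ∧
      ∀ e ∉ G.inner (X ∪ D), ψ e = 0 := by
  have hinner := (between_eq_cutEdges_inter_inner (G := G) hDX).subset.trans Set.inter_subset_right
  obtain ⟨d₀, hd₀, x₀, hx₀, hlink₀⟩ := id he₀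
  obtain ⟨ψ, hψ, hval⟩ := exists_isFlow_eq_of_reaches (G := G)
    (P := fun e => e ∈ G.inner D ∨ e ∈ G.inner X ∨ e = e₀) ((G.between D X).indicator g) <| by
    intro e he
    obtain ⟨d, hd, x, hx, hlink⟩ := Set.mem_of_indicator_ne_zero he
    refine hlink.reaches_src_tgt (.trans ?_ (.trans (hlink₀.reaches (Or.inr (Or.inr rfl))) ?_))
    · exact hD.reaches (fun _ => Or.inl) hd hd₀
    · exact hX.reaches (fun _ he => Or.inr (Or.inl he)) hx₀ hx
  refine ⟨ψ, hψ, fun e he hne => ?_, fun e he => ?_⟩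
  · rw [hval, Set.indicator_of_mem he]
    have := Set.disjoint_left.1 (disjoint_between_inner_left hDX) he
    have := Set.disjoint_left.1 (disjoint_between_inner_right hDX) he
    tauto
  · rw [hval, Set.indicator_of_notMem (mt (@hinner e) he)]
    rintro (h | h | rfl)
    exacts [he (inner_mono Set.subset_union_right h), he (inner_mono Set.subset_union_left h),
      he (hinner he₀)]

/-- Two flows that agree on all but two edges of the cut agree on both or on neither of them, so one
of two candidate values on `e₁` gives a good value on `e₀`. -/
lemma exists_isFlow_avoiding_between [Finite V] [Finite Γ] (hΓ : 3 ≤ Nat.card Γ)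
    (hDX : Disjoint D X) (hX : G.IsConn X) (hD : G.IsConn D)
    (htwo : 2 ≤ (G.between D X).ncard) (f : E → Γ) :
    ∃ ψ : E → Γ, G.IsFlow ψ ∧ (∀ e ∈ G.between D X, ψ e ≠ f e) ∧
      ∀ e ∉ G.inner (X ∪ D), ψ e = 0 := by
  obtain ⟨e₀, he₀, e₁, he₁, hne⟩ := (Set.one_lt_ncard (Set.toFinite _)).1 htwo
  have : Nontrivial Γ := Finite.one_lt_card_iff_nontrivial.1 (by omega)
  obtain ⟨t, ht⟩ := exists_ne (0 : Γ)
  choose ψ hψ hval hoff using fun c => exists_isFlow_eqOn_between hDX hX hD he₀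
    (Function.update (fun e => f e + t) e₁ c)
  have hval₁ (c : Γ) : ψ c e₁ = c := by simpa using hval c e₁ he₁ hne.symm
  have hK := between_eq_cutEdges_inter_inner (G := G) hDX
  have hinj : Function.Injective fun c => ψ c e₀ := by
    intro c c' hcc'
    have hzero : (ψ c - ψ c') e₁ = 0 := by
      refine ((hψ c).sub (hψ c')).eq_zero_of_mem_cutEdges (hK.subset he₁).1 fun e he hne₁ => ?_
      by_cases hin : e ∈ G.inner (X ∪ D)
      · obtain rfl | hne₀ := eq_or_ne e e₀
        · exact sub_eq_zero.2 hcc'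
        · have heK := hK.symm.subset ⟨he, hin⟩
          simp [hval _ e heK hne₀, hne₁]
      · simp [hoff _ e hin]
    simpa [hval₁, sub_eq_zero] using hzero
  obtain ⟨c, hc, c', hc', hcc'⟩ : ∃ c ∈ ({f e₁}ᶜ : Set Γ), ∃ c' ∈ ({f e₁}ᶜ : Set Γ), c ≠ c' := by
    rw [← Set.one_lt_ncard (Set.toFinite _), Set.ncard_compl, Set.ncard_singleton]
    omega
  obtain ⟨c, hc, hc₀⟩ : ∃ c ≠ f e₁, ψ c e₀ ≠ f e₀ := by
    by_contra! h
    exact hcc' (hinj ((h c hc).trans (h c' hc').symm))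
  refine ⟨ψ c, hψ c, fun e he => ?_, hoff c⟩
  obtain rfl | h₀ := eq_or_ne e e₀
  · exact hc₀
  obtain rfl | h₁ := eq_or_ne e e₁
  · rwa [hval₁]
  · simpa [hval c e he h₀, h₁] using ht

end Between

/-! ### Growing a peripheral set -/

section Growth

variable {X D : Set V} {S : Set E} {y : V}

lemma Peripheral.union_inner (hS : G.Peripheral S) (hDX : D ⊆ Xᶜ) (hy : y ∉ X)
    (h : ∀ w ∉ X, G.Reaches (· ∉ S ∪ G.inner D) w y) : G.Peripheral (S ∪ G.inner D) := by
  refine connectedVia_of_reaches (v := y) fun u => ?_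
  obtain ⟨w, hw, huw⟩ := (hS.2 u y).exists_notMem_reaches_notMem_inner hy
  exact (huw.mono fun e he => not_or.2 ⟨he.1, fun heD => he.2 (inner_mono hDX heD)⟩).trans (h w hw)

lemma Peripheral.union_inner_of_adj (hS : G.Peripheral S) (hSX : S ⊆ G.inner X) (hDX : D ⊆ Xᶜ)
    (hM : G.IsConn (Xᶜ \ D)) (hne : (Xᶜ \ D).Nonempty)
    (hadj : ∀ d ∈ D, ∃ m ∈ Xᶜ \ D, G.Adj d m) : G.Peripheral (S ∪ G.inner D) := by
  obtain ⟨y, hy⟩ := hne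
  have havoid : ∀ {e w m}, G.IsLink e w m → m ∈ Xᶜ \ D → e ∉ S ∪ G.inner D := by
    rintro e w m hlink hm (he | he)
    exacts [hm.1 (hlink.mem_inner_iff.1 (hSX he)).2, hm.2 (hlink.mem_inner_iff.1 he).2]
  have hMy : ∀ w ∈ Xᶜ \ D, G.Reaches (· ∉ S ∪ G.inner D) w y :=
    fun w hw => hM.reaches (fun e he => havoid (isLink_src_tgt e) he.2) hw hy
  refine hS.union_inner hDX hy.1 fun w hw => ?_
  by_cases hwD : w ∈ D
  · obtain ⟨m, hm, e, -, hwm⟩ := hadj w hwD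
    exact (IsLink.reaches hwm (havoid hwm hm)).trans (hMy m hm)
  · exact hMy w ⟨hw, hwD⟩

variable [Fintype E] {Γ : Type} [AddCommGroup Γ]

/-- Any values on the edges inside `X` but outside `S` can be avoided by a `Γ`-flow supported
inside `X`. -/
def Avoidable (G : Multigraph V E) (Γ : Type) [AddCommGroup Γ] (X : Set V) (S : Set E) : Prop :=
  ∀ f : E → Γ, ∃ φ : E → Γ, G.IsFlow φ ∧ (∀ e ∉ G.inner X, φ e = 0) ∧
    ∀ e ∈ G.inner X \ S, φ e ≠ f e

/-- `S` is a peripheral set of edges inside the connected vertex set `X`, all other edges inside `X`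
are avoidable, and the rest of the graph is still connected. Such pairs `(X, S)` are the stages in
which a cycle grows to a peripheral set whose complement is avoidable in the whole graph. -/
structure IsPeripheralStage (G : Multigraph V E) (Γ : Type) [AddCommGroup Γ] (X : Set V)
    (S : Set E) : Prop where
  nonempty : X.Nonempty
  isConn : G.IsConn X
  isConn_compl : G.IsConn Xᶜ
  subset_inner : S ⊆ G.inner X
  peripheral : G.Peripheral S
  avoidable : G.Avoidable Γ X S

lemma Avoidable.union [Finite V] [Finite Γ] (hΓ : 3 ≤ Nat.card Γ) (h : G.Avoidable Γ X S)
    (hDX : Disjoint D X) (hX : G.IsConn X) (hD : G.IsConn D)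
    (htwo : 2 ≤ (G.between D X).ncard) : G.Avoidable Γ (X ∪ D) (S ∪ G.inner D) := by
  intro f
  obtain ⟨ψ, hψ, hψf, hψ₀⟩ := exists_isFlow_avoiding_between hΓ hDX hX hD htwo f
  obtain ⟨φ, hφ, hφ₀, hφf⟩ := h (f - ψ)
  refine ⟨φ + ψ, hφ.add hψ, fun e he => ?_, ?_⟩
  · simp [hψ₀ e he, hφ₀ e fun h => he (inner_mono Set.subset_union_left h)]
  · rintro e ⟨he, heS⟩
    rw [Set.mem_union, not_or] at heS
    by_cases heX : e ∈ G.inner X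
    · simpa [eq_sub_iff_add_eq] using hφf e ⟨heX, heS.1⟩
    · have heDX : e ∈ G.between D X :=
        (inner_union_subset he).resolve_left (not_or.2 ⟨heX, heS.2⟩)
      simpa [hφ₀ e heX] using hψf e heDX

variable [Finite V] [Finite Γ]

lemma IsPeripheralStage.exists_union (hΓ : 3 ≤ Nat.card Γ) (hG : G.EdgeConnected 3)
    (hcubic : G.Cubic) (hS : G.IsPeripheralStage Γ X S) (hXc : Xᶜ.Nonempty) :
    ∃ D ⊆ Xᶜ, D.Nonempty ∧ G.IsPeripheralStage Γ (X ∪ D) (S ∪ G.inner D) := by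
  obtain ⟨D, hDX, hD, hM, htwo, hcase⟩ :=
    exists_nonseparating hG hcubic hS.nonempty hXc hS.isConn_compl
  obtain ⟨e, d, hd, x, hx, hdx⟩ : (G.between D X).Nonempty := by
    rw [← Set.ncard_pos]
    omega
  refine ⟨D, hDX, ⟨d, hd⟩, hS.nonempty.mono Set.subset_union_left,
    hS.isConn.union_of_adj hD hx hd ⟨e, trivial, hdx.symm⟩, ?_,
    Set.union_subset (hS.subset_inner.trans (inner_mono Set.subset_union_left))
      (inner_mono Set.subset_union_right), ?_,
    hS.avoidable.union hΓ (Set.subset_compl_iff_disjoint_right.1 hDX) hS.isConn hD htwo⟩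
  · rwa [Set.compl_union, ← Set.sdiff_eq]
  · rcases hcase with ⟨rfl, hsub⟩ | ⟨hne, hadj⟩
    · refine hS.peripheral.union_inner hDX (hDX hd) fun w hw => ?_
      rw [hsub hw hd]
      exact Relation.ReflTransGen.refl
    · exact hS.peripheral.union_inner_of_adj hS.subset_inner hDX hM hne hadj

lemma IsPeripheralStage.exists_superset (hΓ : 3 ≤ Nat.card Γ) (hG : G.EdgeConnected 3)
    (hcubic : G.Cubic) (hS : G.IsPeripheralStage Γ X S) :
    ∃ T ⊇ S, G.Peripheral T ∧ G.Avoidable Γ Set.univ T := by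
  induction hn : Xᶜ.ncard using Nat.strong_induction_on generalizing X S with
  | _ n ih =>
  rcases Xᶜ.eq_empty_or_nonempty with hXc | hXc
  · obtain rfl := Set.compl_empty_iff.1 hXc
    exact ⟨S, subset_rfl, hS.peripheral, hS.avoidable⟩
  · obtain ⟨D, hDX, ⟨d, hd⟩, hstage⟩ := hS.exists_union hΓ hG hcubic hXc
    have hlt : (X ∪ D)ᶜ.ncard < n := by
      rw [← hn]
      exact Set.ncard_lt_ncard ((Set.ssubset_iff_of_subset
        (Set.compl_subset_compl.2 Set.subset_union_left)).2 ⟨d, hDX hd, fun h => h (Or.inr hd)⟩)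
    obtain ⟨T, hT, hTstage⟩ := ih _ hlt hstage rfl
    exact ⟨T, Set.subset_union_left.trans hT, hTstage⟩

end Growth

/-! ### Cycles -/

section Degrees

variable {C : Set E} {e e' : E} {v : V}

/-- The vertex set `V(C)` of the subgraph with edge set `C`. -/
abbrev vertexSet (G : Multigraph V E) (C : Set E) : Set V :=
  {v | G.touches C v}

/-- The degree of `v` in the subgraph with edge set `C`, loops counted twice. -/
noncomputable def degreeIn (G : Multigraph V E) (C : Set E) (v : V) : ℕ :=
  {e ∈ C | G.src e = v}.ncard + {e ∈ C | G.tgt e = v}.ncard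

lemma subset_inner_vertexSet : C ⊆ G.inner (G.vertexSet C) :=
  fun e he => ⟨⟨e, he, Or.inl rfl⟩, ⟨e, he, Or.inr rfl⟩⟩

lemma degreeIn_eq_zero_of_notMem_vertexSet (hv : v ∉ G.vertexSet C) : G.degreeIn C v = 0 := by
  have hs : {e ∈ C | G.src e = v} = ∅ :=
    Set.eq_empty_of_forall_notMem fun e he => hv ⟨e, he.1, Or.inl he.2⟩
  have ht : {e ∈ C | G.tgt e = v} = ∅ :=
    Set.eq_empty_of_forall_notMem fun e he => hv ⟨e, he.1, Or.inr he.2⟩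
  simp [degreeIn, hs, ht]

lemma IsCycle.degreeIn_eq_two (hC : G.IsCycle C) (hv : v ∈ G.vertexSet C) :
    G.degreeIn C v = 2 :=
  hC.2.1 v hv

lemma degreeIn_eq_ncard_add_ncard [Finite E] :
    G.degreeIn C v = (C ∩ G.incident v).ncard + (C ∩ G.inner {v}).ncard := by
  rw [degreeIn, ← Set.ncard_union_add_ncard_inter]
  congr 2
  · exact Set.inter_union_distrib_left .. |>.symm
  · exact Set.inter_inter_distrib_left .. |>.symm

lemma degreeIn_add_degreeIn_compl [Finite E] :
    G.degreeIn C v + G.degreeIn Cᶜ v = G.degree v := by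
  have hsplit (A : Set E) : (C ∩ A).ncard + (Cᶜ ∩ A).ncard = A.ncard := by
    rw [Set.inter_comm, Set.inter_comm Cᶜ, ← Set.sdiff_eq, Set.ncard_inter_add_ncard_sdiff_eq_ncard]
  have hs := hsplit {e | G.src e = v}
  have ht := hsplit {e | G.tgt e = v}
  rw [degree, ← hs, ← ht]
  exact add_add_add_comm ..

lemma sum_degreeIn [Fintype V] [Finite E] : ∑ v, G.degreeIn C v = 2 * C.ncard := by
  have := Fintype.ofFinite E
  have hfiber (g : E → V) : ∑ v, {e ∈ C | g e = v}.ncard = C.ncard := by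
    rw [Set.ncard_eq_toFinset_card', Finset.card_eq_sum_card_fiberwise (f := g) (t := Finset.univ)
      (fun _ _ => Finset.mem_coe.2 (Finset.mem_univ _))]
    refine Finset.sum_congr rfl fun v _ => ?_
    rw [Set.ncard_eq_toFinset_card']
    congr 1
    ext e
    simp
  simp [degreeIn, Finset.sum_add_distrib, hfiber, two_mul]

lemma IsCycle.ncard_vertexSet [Finite V] [Finite E] (hC : G.IsCycle C) :
    (G.vertexSet C).ncard = C.ncard := by
  have := Fintype.ofFinite V
  have hdeg (v : V) : G.degreeIn C v = if v ∈ G.vertexSet C then 2 else 0 := by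
    split_ifs with hv
    exacts [hC.degreeIn_eq_two hv, degreeIn_eq_zero_of_notMem_vertexSet hv]
  have hsum := sum_degreeIn (G := G) (C := C)
  rw [Finset.sum_congr rfl fun v _ => hdeg v, Finset.sum_ite, Finset.sum_const_zero, add_zero,
    Finset.sum_const, smul_eq_mul, mul_comm, ← Set.ncard_coe_finset] at hsum
  simpa using hsum

lemma cutEdges_singleton (v : V) : G.cutEdges {v} = G.incident v \ G.inner {v} := by
  ext e
  simp only [cutEdges, incident, inner, Set.mem_singleton_iff, Set.mem_sdiff, Set.mem_ofPred_eq]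
  tauto

lemma IsCycle.inter_cutEdges_singleton_eq_pair [Finite E] (hC : G.IsCycle C)
    (he : e ∈ C ∩ G.incident v) (he' : e' ∈ C ∩ G.incident v) (hne : e ≠ e') :
    C ∩ G.cutEdges {v} = {e, e'} := by
  have hdeg := hC.degreeIn_eq_two ⟨e, he⟩
  have hpair := Set.ncard_pair hne
  have hsub := Set.pair_subset he he'
  have hle := Set.ncard_le_ncard hsub
  rw [degreeIn_eq_ncard_add_ncard] at hdeg
  have hinc : {e, e'} = C ∩ G.incident v := Set.eq_of_subset_of_ncard_le hsub (by omega)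
  have hloop : C ∩ G.inner {v} = ∅ := by
    rw [← Set.ncard_eq_zero]
    omega
  rw [cutEdges_singleton, Set.inter_sdiff_distrib_left, hloop, Set.sdiff_empty, hinc]

lemma Cubic.subsingleton_incident_sdiff [Finite E] (hcubic : G.Cubic) (hC : G.IsCycle C)
    (hv : v ∈ G.vertexSet C) : (G.incident v \ C).Subsingleton := by
  have hdeg := hcubic v
  rw [← degreeIn_add_degreeIn_compl (C := C), hC.degreeIn_eq_two hv,
    degreeIn_eq_ncard_add_ncard, Set.inter_comm, ← Set.sdiff_eq] at hdeg
  exact Set.ncard_le_one_iff_subsingleton.1 (by omega)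

end Degrees

section Cycles

variable {C : Set E}

lemma IsCycle.isConn_vertexSet (hC : G.IsCycle C) : G.IsConn (G.vertexSet C) :=
  fun u hu v hv => (hC.2.2 u v hu hv).mono fun _ he => ⟨trivial, subset_inner_vertexSet he⟩

lemma Cubic.isConn_compl_vertexSet [Finite E] (hcubic : G.Cubic) (hC : G.IsCycle C)
    (hCper : G.Peripheral C) : G.IsConn (G.vertexSet C)ᶜ := by
  intro u hu v hv
  by_contra huv
  have hK := mem_comp_self (G := G) hu
  set K := G.comp (G.vertexSet C)ᶜ u
  have hvK : v ∉ K := fun h => huv h.2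
  have hvB : v ∉ K ∪ {x ∈ G.vertexSet C | ∃ a ∈ K, G.adjVia (· ∉ C) x a} :=
    not_or.2 ⟨hvK, fun h => hv h.1⟩
  obtain ⟨c, hc, d, hd, e, he, hcd⟩ :=
    (hCper.2 u v).exists_adjVia_of_mem_of_notMem (Or.inl hK) hvB
  obtain ⟨hdK, hdB⟩ := not_or.1 hd
  rcases hc with hc | ⟨hcC, a, ha, e', he', hca⟩
  · by_cases hdC : d ∈ G.vertexSet C
    · exact hdB ⟨hdC, c, hc, e, he, IsLink.symm hcd⟩
    · exact hdK (mem_comp_of_isLink hc hdC hcd)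
  · obtain rfl := hcubic.subsingleton_incident_sdiff hC hcC ⟨IsLink.mem_incident hcd, he⟩
      ⟨IsLink.mem_incident hca, he'⟩
    exact hdK (IsLink.right_unique hca hcd ▸ ha)

lemma IsCycle.isFlow_indicator_one [Fintype E] (hC : G.IsCycle C) :
    G.IsFlow (C.indicator 1 : E → ZMod 2) := by
  intro v
  have hcount (g : E → V) : (∑ e, if g e = v then C.indicator (1 : E → ZMod 2) e else 0) =
      ({e ∈ C | g e = v}.ncard : ℕ) := by
    simp only [Set.indicator_apply, Pi.one_apply, ← ite_and, Finset.sum_boole]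
    rw [Set.ncard_eq_toFinset_card']
    congr 2
    ext e
    simp [and_comm]
  rw [hcount, hcount, ← sub_eq_zero, CharTwo.sub_eq_add, ← Nat.cast_add]
  change (G.degreeIn C v : ZMod 2) = 0
  by_cases hv : v ∈ G.vertexSet C
  · rw [hC.degreeIn_eq_two hv]
    rfl
  · rw [degreeIn_eq_zero_of_notMem_vertexSet hv, Nat.cast_zero]

/-- Otherwise the `ZMod 2`-flow carried by `C` would cross an edge cut in `e` alone. -/
lemma IsCycle.reaches_sdiff_singleton [Finite V] [Finite E] {e : E} (hC : G.IsCycle C)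
    (he : e ∈ C) :
    G.Reaches (· ∈ C \ {e}) (G.src e) (G.tgt e) := by
  have := Fintype.ofFinite E
  by_contra hreach
  have hcut : e ∈ G.cutEdges {w | G.Reaches (· ∈ C \ {e}) (G.src e) w} :=
    Or.inl ⟨Relation.ReflTransGen.refl, hreach⟩
  have hzero := hC.isFlow_indicator_one.eq_zero_of_mem_cutEdges hcut fun e' he' hne => by
    rw [cutEdges_eq_between] at he'
    obtain ⟨a, ha, b, hb, hab⟩ := he'
    exact Set.indicator_of_notMem (fun heC => hb (ha.trans (hab.reaches ⟨heC, hne⟩))) _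
  simp [he] at hzero

variable [Fintype E] {Γ : Type} [AddCommGroup Γ] {φ ψ : E → Γ} {e e' : E} {v : V}

lemma IsCycle.avoidable [Nontrivial Γ] (hC : G.IsCycle C) :
    G.Avoidable Γ (G.vertexSet C) C := by
  intro f
  obtain ⟨t, ht⟩ := exists_ne (0 : Γ)
  obtain ⟨φ, hφ, hval⟩ := exists_isFlow_eq_of_reaches (G := G) (P := (· ∈ C))
    ((G.inner (G.vertexSet C)).indicator (fun e => f e + t)) fun e he =>
      have hin := Set.mem_of_indicator_ne_zero he
      hC.2.2 _ _ hin.1 hin.2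
  refine ⟨φ, hφ, fun e he => ?_, fun e he => ?_⟩
  · rw [hval e (mt (@subset_inner_vertexSet _ _ G C e) he), Set.indicator_of_notMem he]
  · simpa [hval e he.2, Set.indicator_of_mem he.1] using ht

lemma Peripheral.exists_superset_avoidable [Finite V] [Finite Γ] (hΓ : 3 ≤ Nat.card Γ)
    (hG : G.EdgeConnected 3) (hcubic : G.Cubic) (hC : G.IsCycle C) (hCper : G.Peripheral C) :
    ∃ S ⊇ C, G.Peripheral S ∧ G.Avoidable Γ Set.univ S := by
  have : Nontrivial Γ := Finite.one_lt_card_iff_nontrivial.1 (by omega)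
  obtain ⟨e, he⟩ := hC.1
  have hstage : G.IsPeripheralStage Γ (G.vertexSet C) C :=
    ⟨⟨_, e, he, Or.inl rfl⟩, hC.isConn_vertexSet, hcubic.isConn_compl_vertexSet hC hCper,
      subset_inner_vertexSet, hCper, hC.avoidable⟩
  exact hstage.exists_superset hΓ hG hcubic

lemma IsCycle.exists_isFlow_apply_eq [Finite V] (hC : G.IsCycle C) (he : e ∈ C) (γ : Γ) :
    ∃ ψ : E → Γ, G.IsFlow ψ ∧ (∀ e' ∉ C, ψ e' = 0) ∧ ψ e = γ := by
  obtain ⟨ψ, hψ, hval⟩ := exists_isFlow_eq_of_reaches (G := G) (P := (· ∈ C \ {e}))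
    (Pi.single e γ) fun e' he' => by
      obtain rfl : e' = e := by_contra fun hne => he' (by simp [hne])
      exact hC.reaches_sdiff_singleton he
  refine ⟨ψ, hψ, fun e' he' => ?_, by simp [hval]⟩
  have hne : e' ≠ e := fun h => he' (h ▸ he)
  simp [hval e' (fun h => he' h.1), hne]

lemma IsCycle.eq_zero_of_mem_incident [Finite V] (hC : G.IsCycle C) (hψ : G.IsFlow ψ)
    (hψC : ∀ e ∉ C, ψ e = 0) (he : e ∈ C ∩ G.incident v) (he' : e' ∈ C ∩ G.incident v)
    (h : ψ e = 0) : ψ e' = 0 := by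
  obtain rfl | hne := eq_or_ne e e'
  · exact h
  have hpair := hC.inter_cutEdges_singleton_eq_pair he he' hne
  have hcut : e' ∈ C ∩ G.cutEdges {v} := hpair ▸ Or.inr rfl
  refine hψ.eq_zero_of_mem_cutEdges hcut.2 fun e'' he'' hne' => ?_
  by_cases heC : e'' ∈ C
  · obtain rfl | rfl : e'' ∈ ({e, e'} : Set E) := hpair ▸ ⟨heC, he''⟩
    exacts [h, absurd rfl hne']
  · exact hψC e'' heC

lemma IsCycle.eq_zero_of_apply_eq_zero [Finite V] (hC : G.IsCycle C) (hψ : G.IsFlow ψ)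
    (hψC : ∀ e ∉ C, ψ e = 0) (he : e ∈ C) (h : ψ e = 0) (he' : e' ∈ C) : ψ e' = 0 := by
  have hspread (v) (hv : G.Reaches (· ∈ C) (G.src e) v) :
      ∀ e' ∈ C ∩ G.incident v, ψ e' = 0 := by
    induction hv with
    | refl => exact fun e' he' => hC.eq_zero_of_mem_incident hψ hψC ⟨he, Or.inl rfl⟩ he' h
    | @tail b c _ hbc ih =>
      obtain ⟨d, hd, hlink⟩ := hbc
      exact fun e' he' => hC.eq_zero_of_mem_incident hψ hψC
        ⟨hd, IsLink.mem_incident (IsLink.symm hlink)⟩ he'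
        (ih d ⟨hd, IsLink.mem_incident hlink⟩)
  exact hspread (G.src e') (hC.2.2 _ _ ⟨e, he, Or.inl rfl⟩ ⟨e', he', Or.inl rfl⟩) e'
    ⟨he', Or.inl rfl⟩

end Cycles

/-! ### Counting -/

/-- Each `a ∈ s` satisfies `Φ i a = f a` for at most one `i`, hence for an average `i` at most a
`1 / card ι` fraction of `s` does. -/
lemma exists_le_card_filter_ne {ι α β : Type*} [Finite ι] [Nonempty ι] (s : Finset α)
    (Φ : ι → α → β) (hΦ : ∀ a ∈ s, Function.Injective fun i => Φ i a) (f : α → β) :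
    ∃ i, (1 - 1 / (Nat.card ι : ℝ)) * s.card ≤ {a ∈ s | Φ i a ≠ f a}.card := by
  have := Fintype.ofFinite ι
  have hsum : ∑ i, {a ∈ s | Φ i a = f a}.card ≤ s.card := by
    simp only [Finset.card_filter]
    rw [Finset.sum_comm, Finset.card_eq_sum_ones]
    refine Finset.sum_le_sum fun a ha => ?_
    rw [← Finset.card_filter, Finset.card_le_one]
    intro i hi j hj
    simp only [Finset.mem_filter_univ] at hi hj
    exact hΦ a ha (hi.trans hj.symm)
  obtain ⟨i, -, hi⟩ : ∃ i ∈ Finset.univ,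
      ({a ∈ s | Φ i a = f a}.card : ℝ) ≤ s.card / Nat.card ι := by
    refine Finset.exists_le_of_sum_le Finset.univ_nonempty ?_
    rw [Finset.sum_const, Finset.card_univ, nsmul_eq_mul, Nat.card_eq_fintype_card,
      mul_div_cancel₀ _ (by positivity)]
    exact_mod_cast hsum
  have hsplit : ({a ∈ s | Φ i a = f a}.card + {a ∈ s | Φ i a ≠ f a}.card : ℝ) = s.card :=
    mod_cast Finset.card_filter_add_card_filter_not _
  refine ⟨i, ?_⟩
  rw [sub_mul, one_mul, one_div_mul_eq_div]
  linarith

section Counting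

variable [Fintype E] {Γ Δ : Type} [AddCommGroup Γ] [AddCommGroup Δ] {C S : Set E}

lemma IsCycle.exists_isFlow_le_ncard_ne [Finite V] [Finite Δ] (hC : G.IsCycle C)
    {φ : E → Δ} (hφ : G.IsFlow φ) (f : E → Δ) :
    ∃ φ' : E → Δ, G.IsFlow φ' ∧ (∀ e ∉ C, φ' e = φ e) ∧
      (1 - 1 / (Nat.card Δ : ℝ)) * C.ncard ≤ {e ∈ C | φ' e ≠ f e}.ncard := by
  obtain ⟨e₀, he₀⟩ := hC.1
  choose ψ hψ hψC hψe₀ using fun δ : Δ => hC.exists_isFlow_apply_eq he₀ δ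
  have hinj (e) (he : e ∈ C.toFinset) : Function.Injective fun δ => (φ + ψ δ) e := by
    intro δ δ' h
    have hzero := hC.eq_zero_of_apply_eq_zero ((hψ δ).sub (hψ δ'))
      (fun e he => by simp [hψC _ e he]) (Set.mem_toFinset.1 he)
      (by simpa [sub_eq_zero] using h) he₀
    simpa [hψe₀, sub_eq_zero] using hzero
  obtain ⟨δ, hδ⟩ := exists_le_card_filter_ne C.toFinset (fun δ => φ + ψ δ) hinj f
  refine ⟨φ + ψ δ, hφ.add (hψ δ), fun e he => by simp [hψC δ e he], ?_⟩
  convert hδ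
  · exact Set.ncard_eq_toFinset_card' C
  · rw [← Set.ncard_coe_finset]
    simp

/-- The `Γ`-coordinates on `S` can be prescribed at will; where the `Δ`-coordinate already avoids
`f` they are free, and elsewhere on `S` they are chosen different from those of `f`. -/
lemma Peripheral.card_pow_ncard_le_card [Finite Γ] [Nontrivial Γ] [Finite Δ] (hS : G.Peripheral S)
    (f : E → Γ × Δ) {φ : E → Δ} (hφ : G.IsFlow φ) (hφS : ∀ e ∉ S, φ e ≠ (f e).2) :
    Nat.card Γ ^ {e ∈ S | φ e ≠ (f e).2}.ncard ≤
      Nat.card {φ : E → Γ × Δ // G.IsFlow φ ∧ ∀ e, φ e ≠ f e} := by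
  obtain ⟨t, ht⟩ := exists_ne (0 : Γ)
  set A := {e ∈ S | φ e ≠ (f e).2}
  let τ (g : A → Γ) (e : E) : Γ := if h : e ∈ A then g ⟨e, h⟩ else (f e).1 + t
  choose χ hχ hχS using fun g : A → Γ =>
    exists_isFlow_eq_of_reaches (G := G) (P := (· ∉ S)) (τ g) fun _ _ => hS.2 _ _
  have hχne (g e) : (χ g e, φ e) ≠ f e := by
    intro h
    obtain ⟨h₁, h₂⟩ := Prod.ext_iff.1 h
    have heS : e ∈ S := not_not.1 fun he => hφS e he h₂
    have heA : e ∉ A := fun he => he.2 h₂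
    simp [hχS g e (not_not.2 heS), τ, heA, ht] at h₁
  have hinj : Function.Injective fun g : A → Γ =>
      (⟨fun e => (χ g e, φ e), (hχ g).prodMk hφ, hχne g⟩ :
        {φ : E → Γ × Δ // G.IsFlow φ ∧ ∀ e, φ e ≠ f e}) := by
    intro g g' h
    ext ⟨e, he⟩
    have hχe : χ g e = χ g' e := congrArg Prod.fst (congrFun (congrArg Subtype.val h) e)
    simpa [hχS _ e (not_not.2 he.1), τ, he] using hχe
  calc Nat.card Γ ^ A.ncard = Nat.card (A → Γ) := by rw [Nat.card_fun, Nat.card_coe_set_eq]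
    _ ≤ _ := Nat.card_le_card_of_injective _ hinj

end Counting

end Multigraph

theorem many_flows_from_long_peripheral_cycle_general {V E Γ Δ : Type} [Finite V] [Fintype E]
    [AddCommGroup Γ] [Finite Γ] [Nontrivial Γ] [AddCommGroup Δ] [Finite Δ] (hΔ : 3 ≤ Nat.card Δ)
    (G : Multigraph V E) (hG : G.EdgeConnected 3) (hcubic : G.Cubic)
    (C : Set E) (hC : G.IsCycle C) (hCper : G.Peripheral C)
    (q : ℕ) (hq : {v : V | G.touches C v}.ncard = q) (f : E → Γ × Δ) :
    (Nat.card Γ : ℝ) ^ ((1 - 1 / (Nat.card Δ : ℝ)) * q) ≤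
      Nat.card {φ : E → Γ × Δ // G.IsFlow φ ∧ ∀ e : E, φ e ≠ f e} := by
  obtain ⟨S, hCS, hS, havoid⟩ := hCper.exists_superset_avoidable hΔ hG hcubic hC
  obtain ⟨φ₀, hφ₀, -, hφ₀S⟩ := havoid fun e => (f e).2
  obtain ⟨φ, hφ, hφC, hle⟩ := hC.exists_isFlow_le_ncard_ne hφ₀ fun e => (f e).2
  have hφS : ∀ e ∉ S, φ e ≠ (f e).2 := fun e he => by
    rw [hφC e fun h => he (hCS h)]
    exact hφ₀S e ⟨⟨trivial, trivial⟩, he⟩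
  have hmany : (1 - 1 / (Nat.card Δ : ℝ)) * q ≤ {e ∈ S | φ e ≠ (f e).2}.ncard := by
    rw [← hq, hC.ncard_vertexSet]
    exact hle.trans (mod_cast Set.ncard_le_ncard fun e he => ⟨hCS he.1, he.2⟩)
  calc (Nat.card Γ : ℝ) ^ ((1 - 1 / (Nat.card Δ : ℝ)) * q)
      ≤ (Nat.card Γ : ℝ) ^ ({e ∈ S | φ e ≠ (f e).2}.ncard : ℝ) :=
        Real.rpow_le_rpow_of_exponent_le (mod_cast Nat.card_pos) hmany
    _ ≤ _ := by
        rw [Real.rpow_natCast]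
        exact_mod_cast hS.card_pow_ncard_le_card f hφ hφS

/-- Let `G` be an oriented 3-edge-connected cubic graph with a peripheral cycle `C` on
`q` vertices. For every `f : E → ℤ₂ × ℤ₃` there are at least `2^(2q/3)` flows `φ` with
`φ(e) ≠ f(e)` for every edge `e`. -/
theorem many_flows_from_long_peripheral_cycle {V E : Type} [Fintype V] [Fintype E]
    (G : Multigraph V E) (hG : G.EdgeConnected 3) (hcubic : G.Cubic)
    (C : Set E) (hC : G.IsCycle C) (hCper : G.Peripheral C)
    (q : ℕ) (hq : {v : V | G.touches C v}.ncard = q)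
    (f : E → ZMod 2 × ZMod 3) :
    (2 : ℝ) ^ (2 * (q : ℝ) / 3) ≤
      Nat.card {φ : E → ZMod 2 × ZMod 3 // G.IsFlow φ ∧ ∀ e : E, φ e ≠ f e} := by
  convert many_flows_from_long_peripheral_cycle_general (by simp) G hG hcubic C hC hCper q hq f
    using 1
  norm_num [Nat.card_zmod, mul_div_right_comm]
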